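/- Let f : ℝⁿ → ℝ be a smooth function which, together with all its derivatives, grows at most polynomially. Then there exist C ≥ 0 and Δt* > 0 such that for all 0 < Δt ≤ Δt* and all q ∈ ℝⁿ, |E_{G,U}[f(δ_Δt(q,G,U))] − f(0) − Δt(−∇V(q)·∇f(0) + Δf(0))| ≤ C Δt². -/

import Mathlib

/-!
The logarithm of the Metropolis ratio of a move `q → q + x` is minus the error of the trapezoidal
rule for `V` along the move plus `Δt / 4` times the difference of the squared gradients at its ends.
The first term is `O(‖x‖ ^ 3)`, the second `O(Δt ‖x‖)`, and `x` is of size `√Δt`, so a move is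
rejected with probability `O(Δt ^ (3/2))`. A rejection changes the observable by `O(√Δt)`, hence
rejections contribute `O(Δt ^ 2)` to the average. What remains is the Euler–Maruyama step
`x = b + √(2 Δt) G` with `b = -Δt ∇V(q)`: the Gaussian moments of the cubic Taylor polynomial of `f`
at `b` give `f(b) + Δt Δf(b) + O(Δt ^ 2)`, and expanding in `b` gives the claim.
-/

open MeasureTheory RealInnerProductSpace

noncomputable section

abbrev En (n : ℕ) := EuclideanSpace ℝ (Fin n)

/-- Gaussian proposal density of the Euler–Maruyama scheme. -/
def Tker {n : ℕ} (V : En n → ℝ) (dt : ℝ) (q q' : En n) : ℝ :=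
  (4 * Real.pi * dt) ^ (-(n : ℝ) / 2) *
    Real.exp (-‖q' - q + dt • gradient V q‖ ^ 2 / (4 * dt))

/-- Metropolis acceptance probability. -/
def Rk {n : ℕ} (V : En n → ℝ) (dt : ℝ) (q q' : En n) : ℝ :=
  min 1 (Real.exp (-V q') * Tker V dt q' q / (Real.exp (-V q) * Tker V dt q q'))

/-- proposal move -/
def propMove {n : ℕ} (V : En n → ℝ) (dt : ℝ) (q g : En n) : En n :=
  q - dt • gradient V q + Real.sqrt (2 * dt) • g

def xi {n : ℕ} (V : En n → ℝ) (q g : En n) : ℝ :=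
  -(Real.sqrt 2 / 6) * iteratedFDeriv ℝ 3 V q (fun _ => g) +
    (Real.sqrt 2 / 2) * ⟪gradient V q, fderiv ℝ (gradient V) q g⟫

def xiPlus {n : ℕ} (V : En n → ℝ) (q g : En n) : ℝ := max (xi V q g) 0

/-- standard Gaussian measure on ℝⁿ -/
def gauss (n : ℕ) : Measure (En n) :=
  volume.withDensity fun g =>
    ENNReal.ofReal ((2 * Real.pi) ^ (-(n : ℝ) / 2) * Real.exp (-‖g‖ ^ 2 / 2))

/-- fundamental domain of the torus -/
def Box (n : ℕ) (L : ℝ) : Set (En n) := {q | ∀ i, q i ∈ Set.Ico (0 : ℝ) L}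

/-- integral with respect to the Gibbs measure μ on the torus M -/
def muInt {n : ℕ} (V : En n → ℝ) (L : ℝ) (f : En n → ℝ) : ℝ :=
  (∫ q in Box n L, Real.exp (-V q))⁻¹ * ∫ q in Box n L, f q * Real.exp (-V q)

/-- Laplacian -/
def lap {n : ℕ} (ψ : En n → ℝ) (q : En n) : ℝ :=
  ∑ i, iteratedFDeriv ℝ 2 ψ q (fun _ => EuclideanSpace.single i (1 : ℝ))

/-- generator of the overdamped Langevin dynamics -/
def gen {n : ℕ} (V ψ : En n → ℝ) (q : En n) : ℝ :=
  -⟪gradient V q, gradient ψ q⟫ + lap ψ q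

/-- MALA transition operator on periodic functions -/
def Pmala {n : ℕ} (V : En n → ℝ) (dt : ℝ) (f : En n → ℝ) (q : En n) : ℝ :=
  f q + ∫ q', Rk V dt q q' * Tker V dt q q' * (f q' - f q)

/-- the operator D₁ -/
def D1op {n : ℕ} (V ψ : En n → ℝ) (q : En n) : ℝ :=
  2 * ∑ i, ∑ j, (iteratedFDeriv ℝ 2 V q ![EuclideanSpace.single i (1:ℝ), EuclideanSpace.single j (1:ℝ)]) *
      (iteratedFDeriv ℝ 2 ψ q ![EuclideanSpace.single i (1:ℝ), EuclideanSpace.single j (1:ℝ)])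
    + ⟪gradient (fun x => lap V x) q, gradient ψ q⟫
    - ⟪gradient V q, fderiv ℝ (gradient V) q (gradient ψ q)⟫

/-- the operator D₂ -/
def D2op {n : ℕ} (V ψ : En n → ℝ) (q : En n) : ℝ :=
  -Real.sqrt 2 * ⟪∫ g, xiPlus V q g • g ∂(gauss n), gradient ψ q⟫

/-- the operator A appearing in the expansion of the MALA evolution operator -/
def Aop {n : ℕ} (V ψ : En n → ℝ) (q : En n) : ℝ :=
  (gen V (gen V ψ) q + D1op V ψ q + D2op V ψ q) / 2

/-- Metropolized increment -/
def deltaInc {n : ℕ} (V : En n → ℝ) (dt : ℝ) (q g : En n) (u : ℝ) : En n :=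
  if u ≤ Rk V dt q (propMove V dt q g) then (-dt) • gradient V q + Real.sqrt (2 * dt) • g
  else 0

/-- expectation over G (std Gaussian) and U (uniform on [0,1]) of the increment -/
def EguDelta {n : ℕ} (V : En n → ℝ) (dt : ℝ) (q : En n) : En n :=
  ∫ g, (∫ u in Set.Icc (0 : ℝ) 1, deltaInc V dt q g u) ∂(gauss n)


/-- average of an observable of the Metropolized increment over G and U -/
def obsbar {n : ℕ} (V : En n → ℝ) (dt : ℝ) (f : En n → ℝ) (q : En n) : ℝ :=
  ∫ g, (∫ u in Set.Icc (0 : ℝ) 1, f (deltaInc V dt q g u)) ∂(gauss n)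

section Multilinear

variable {E : Type*} [NormedAddCommGroup E] [NormedSpace ℝ E] {k : ℕ} (B : E [×k]→L[ℝ] ℝ)

theorem multilinear_diagonal_smul (s : ℝ) (y : E) :
    (B fun _ => s • y) = s ^ k * B fun _ => y := by
  simpa using B.map_smul_univ (fun _ => s) fun _ => y

theorem abs_multilinear_diagonal_le (y : E) : |B fun _ => y| ≤ ‖B‖ * ‖y‖ ^ k := by
  simpa using B.le_opNorm fun _ => y

end Multilinear

section Taylor

variable {E : Type*} [NormedAddCommGroup E] [NormedSpace ℝ E] {f : E → ℝ} {k : ℕ}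

/-- The Taylor polynomial of degree `k` of `f` at `x`, evaluated at the increment `y`. -/
def taylorSum (f : E → ℝ) (k : ℕ) (x y : E) : ℝ :=
  ∑ j ∈ Finset.range (k + 1), (j.factorial : ℝ)⁻¹ * iteratedFDeriv ℝ j f x fun _ => y

theorem iteratedDeriv_comp_add_smul (hf : ContDiff ℝ k f) (x y : E) (t : ℝ) :
    iteratedDeriv k (fun t : ℝ => f (x + t • y)) t
      = iteratedFDeriv ℝ k f (x + t • y) fun _ => y := by
  have hline : (fun t : ℝ => f (x + t • y))
      = (fun z => f (x + z)) ∘ ContinuousLinearMap.toSpanSingleton ℝ y := by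
    ext t
    simp
  have hshift : ContDiff ℝ k fun z => f (x + z) := hf.comp (by fun_prop)
  rw [iteratedDeriv_eq_iteratedFDeriv, hline,
    ContinuousLinearMap.iteratedFDeriv_comp_right _ hshift t le_rfl, iteratedFDeriv_comp_add_left]
  simp

theorem abs_sub_taylorSum_le (hf : ContDiff ℝ (k + 1) f) {x y : E} {K : ℝ}
    (hK : ∀ t ∈ Set.Icc (0 : ℝ) 1, ‖iteratedFDeriv ℝ (k + 1) f (x + t • y)‖ ≤ K) :
    |f (x + y) - taylorSum f k x y| ≤ K * ‖y‖ ^ (k + 1) / k.factorial := by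
  let φ : ℝ → ℝ := fun t => f (x + t • y)
  have hφ : ContDiff ℝ (k + 1) φ := hf.comp (by fun_prop)
  have hderiv {j : ℕ} (hj : j ≤ k + 1) {t : ℝ} (ht : t ∈ Set.Icc (0 : ℝ) 1) :
      iteratedDerivWithin j φ (Set.Icc 0 1) t = iteratedFDeriv ℝ j f (x + t • y) fun _ => y := by
    have hj' : (j : WithTop ℕ∞) ≤ k + 1 := mod_cast hj
    rw [iteratedDerivWithin_eq_iteratedDeriv (uniqueDiffOn_Icc zero_lt_one)
      (hφ.of_le hj').contDiffAt ht, iteratedDeriv_comp_add_smul (hf.of_le hj')]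
  have htaylor := taylor_mean_remainder_bound (f := φ) (a := 0) (b := 1) (x := 1) (n := k)
    (C := K * ‖y‖ ^ (k + 1)) zero_le_one hφ.contDiffOn (Set.right_mem_Icc.2 zero_le_one)
    fun t ht => by
      rw [hderiv le_rfl ht]
      exact (abs_multilinear_diagonal_le _ y).trans (by gcongr; exact hK t ht)
  have hpoly : taylorWithinEval φ k (Set.Icc 0 1) 0 1 = taylorSum f k x y := by
    rw [taylor_within_apply, taylorSum]
    refine Finset.sum_congr rfl fun j hj => ?_
    rw [hderiv (Finset.mem_range.1 hj).le (Set.left_mem_Icc.2 zero_le_one)]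
    simp
  simpa [φ, hpoly] using htaylor

theorem abs_sub_taylorSum_smul_le (hf : ContDiff ℝ (k + 1) f) {C : ℝ} {m : ℕ}
    (hC : ∀ x, ‖iteratedFDeriv ℝ (k + 1) f x‖ ≤ C * (1 + ‖x‖) ^ m) (b g : E) (s : ℝ) :
    |f (b + s • g) - taylorSum f k b (s • g)|
      ≤ C * (1 + ‖b‖ + |s|) ^ m * |s| ^ (k + 1) / k.factorial * (1 + ‖g‖) ^ (m + (k + 1)) := by
  have hC0 : 0 ≤ C := by simpa using (norm_nonneg _).trans (hC 0)
  have hseg {t : ℝ} (ht : t ∈ Set.Icc (0 : ℝ) 1) :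
      1 + ‖b + t • s • g‖ ≤ (1 + ‖b‖ + |s|) * (1 + ‖g‖) :=
    calc 1 + ‖b + t • s • g‖ ≤ 1 + (‖b‖ + t * (|s| * ‖g‖)) := by
          gcongr
          simpa [norm_smul, abs_of_nonneg ht.1] using norm_add_le b (t • s • g)
      _ ≤ 1 + (‖b‖ + |s| * ‖g‖) := by
          gcongr 1 + (_ + ?_)
          exact mul_le_of_le_one_left (by positivity) ht.2
      _ ≤ (1 + ‖b‖ + |s|) * (1 + ‖g‖) := by
          nlinarith [norm_nonneg b, norm_nonneg g, abs_nonneg s]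
  have htaylor := abs_sub_taylorSum_le (x := b) (y := s • g)
    (K := C * ((1 + ‖b‖ + |s|) * (1 + ‖g‖)) ^ m) hf fun t ht => by
      refine (hC _).trans ?_
      gcongr
      exact hseg ht
  refine htaylor.trans ?_
  calc C * ((1 + ‖b‖ + |s|) * (1 + ‖g‖)) ^ m * ‖s • g‖ ^ (k + 1) / k.factorial
      ≤ C * ((1 + ‖b‖ + |s|) * (1 + ‖g‖)) ^ m * (|s| * (1 + ‖g‖)) ^ (k + 1) / k.factorial := by
        rw [norm_smul, Real.norm_eq_abs]
        gcongr
        exact le_add_of_nonneg_left zero_le_one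
    _ = C * (1 + ‖b‖ + |s|) ^ m * |s| ^ (k + 1) / k.factorial * (1 + ‖g‖) ^ (m + (k + 1)) := by
        rw [mul_pow, mul_pow]
        ring

theorem exists_abs_sub_taylorSum_le_of_norm_le [FiniteDimensional ℝ E]
    (hf : ContDiff ℝ (k + 1) f) (x : E) (r : ℝ) :
    ∃ K ≥ 0, ∀ y : E, ‖y‖ ≤ r → |f (x + y) - taylorSum f k x y| ≤ K * ‖y‖ ^ (k + 1) := by
  have : ProperSpace E := FiniteDimensional.proper ℝ E
  obtain ⟨K, hK⟩ := (isCompact_closedBall x r).exists_bound_of_continuousOn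
    (hf.continuous_iteratedFDeriv le_rfl).continuousOn
  refine ⟨max K 0 / k.factorial, by positivity, fun y hy => ?_⟩
  rw [div_mul_eq_mul_div]
  refine abs_sub_taylorSum_le hf fun t ht => (hK _ ?_).trans (le_max_left _ _)
  rw [mem_closedBall_iff_norm, add_sub_cancel_left, norm_smul, Real.norm_of_nonneg ht.1]
  exact (mul_le_of_le_one_left (norm_nonneg y) ht.2).trans hy

theorem exists_abs_sub_le_of_norm_le [FiniteDimensional ℝ E] (hf : ContDiff ℝ 1 f) (x : E)
    (r : ℝ) : ∃ K ≥ 0, ∀ y : E, ‖y‖ ≤ r → |f (x + y) - f x| ≤ K * ‖y‖ := by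
  simpa [taylorSum] using
    exists_abs_sub_taylorSum_le_of_norm_le (k := 0) (hf.of_le (by simp)) x r

theorem exists_abs_sub_fderiv_le_of_norm_le [FiniteDimensional ℝ E] (hf : ContDiff ℝ 2 f) (x : E)
    (r : ℝ) :
    ∃ K ≥ 0, ∀ y : E, ‖y‖ ≤ r → |f (x + y) - (f x + fderiv ℝ f x y)| ≤ K * ‖y‖ ^ 2 := by
  simpa [taylorSum, Finset.sum_range_succ] using
    exists_abs_sub_taylorSum_le_of_norm_le (k := 1) (hf.of_le (by norm_num)) x r

theorem abs_taylorSum_sub_le (x y : E) :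
    |taylorSum f k x y - f x|
      ≤ (∑ j ∈ Finset.range k, ‖iteratedFDeriv ℝ (j + 1) f x‖) * (1 + ‖y‖) ^ k * ‖y‖ := by
  have hsplit : taylorSum f k x y - f x = ∑ j ∈ Finset.range k,
      ((j + 1).factorial : ℝ)⁻¹ * iteratedFDeriv ℝ (j + 1) f x fun _ => y := by
    rw [taylorSum, Finset.sum_range_succ']
    simp
  rw [hsplit, Finset.sum_mul, Finset.sum_mul]
  refine (Finset.abs_sum_le_sum_abs _ _).trans (Finset.sum_le_sum fun j hj => ?_)
  rw [abs_mul, abs_of_nonneg (by positivity)]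
  calc ((j + 1).factorial : ℝ)⁻¹ * |iteratedFDeriv ℝ (j + 1) f x fun _ => y|
      ≤ 1 * (‖iteratedFDeriv ℝ (j + 1) f x‖ * ‖y‖ ^ (j + 1)) := by
        gcongr
        · exact inv_le_one_of_one_le₀ (mod_cast (j + 1).factorial_pos)
        · exact abs_multilinear_diagonal_le _ y
    _ = ‖iteratedFDeriv ℝ (j + 1) f x‖ * ‖y‖ ^ j * ‖y‖ := by ring
    _ ≤ ‖iteratedFDeriv ℝ (j + 1) f x‖ * (1 + ‖y‖) ^ k * ‖y‖ := by
        gcongr ?_ * ?_ * _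
        calc ‖y‖ ^ j ≤ (1 + ‖y‖) ^ j := by gcongr; exact le_add_of_nonneg_left zero_le_one
          _ ≤ (1 + ‖y‖) ^ k := by
            gcongr
            · exact le_add_of_nonneg_right (norm_nonneg y)
            · exact (Finset.mem_range.1 hj).le

theorem exists_abs_sub_le_of_iteratedFDeriv_growth (hf : ContDiff ℝ (k + 1) f) {C : ℝ} {m : ℕ}
    (hC : ∀ x, ‖iteratedFDeriv ℝ (k + 1) f x‖ ≤ C * (1 + ‖x‖) ^ m) :
    ∃ K ≥ 0, ∀ x, |f x - f 0| ≤ K * (1 + ‖x‖) ^ (m + k) * ‖x‖ := by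
  have hC0 : 0 ≤ C := by simpa using (norm_nonneg _).trans (hC 0)
  let S := ∑ j ∈ Finset.range k, ‖iteratedFDeriv ℝ (j + 1) f 0‖
  have : 0 ≤ S := Finset.sum_nonneg fun _ _ => norm_nonneg _
  refine ⟨C + S, by positivity, fun x => ?_⟩
  have hrem : |f x - taylorSum f k 0 x| ≤ C * (1 + ‖x‖) ^ (m + k) * ‖x‖ := by
    have htaylor := abs_sub_taylorSum_le (x := 0) (y := x) (K := C * (1 + ‖x‖) ^ m) hf
      fun t ht => by
        refine (hC _).trans ?_
        gcongr
        rw [zero_add, norm_smul, Real.norm_of_nonneg ht.1]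
        exact mul_le_of_le_one_left (norm_nonneg x) ht.2
    rw [zero_add] at htaylor
    calc |f x - taylorSum f k 0 x| ≤ C * (1 + ‖x‖) ^ m * ‖x‖ ^ (k + 1) / k.factorial := htaylor
      _ ≤ C * (1 + ‖x‖) ^ m * ‖x‖ ^ (k + 1) :=
        div_le_self (by positivity) (mod_cast k.factorial_pos)
      _ ≤ C * (1 + ‖x‖) ^ m * ((1 + ‖x‖) ^ k * ‖x‖) := by
        rw [pow_succ]
        gcongr
        exact le_add_of_nonneg_left zero_le_one
      _ = C * (1 + ‖x‖) ^ (m + k) * ‖x‖ := by ring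
  have hpoly : |taylorSum f k 0 x - f 0| ≤ S * (1 + ‖x‖) ^ (m + k) * ‖x‖ := by
    refine (abs_taylorSum_sub_le 0 x).trans ?_
    gcongr
    · exact le_add_of_nonneg_right (norm_nonneg x)
    · exact Nat.le_add_left k m
  rw [add_mul, add_mul]
  exact (abs_sub_le _ _ _).trans (add_le_add hrem hpoly)

end Taylor

section GaussianMeasure

variable {E : Type*} [NormedAddCommGroup E] [NormedSpace ℝ E] [CompleteSpace E]
  [SecondCountableTopology E] [MeasurableSpace E] [BorelSpace E] {μ : Measure E}
  [ProbabilityTheory.IsGaussian μ] {F : E → ℝ} {K : ℝ} {m : ℕ}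

theorem integrable_one_add_norm_pow (μ : Measure E) [ProbabilityTheory.IsGaussian μ] (m : ℕ) :
    Integrable (fun g => (1 + ‖g‖) ^ m) μ := by
  have hnorm : MemLp (fun g : E => ‖g‖) m μ :=
    (ProbabilityTheory.IsGaussian.memLp_id μ m (ENNReal.natCast_ne_top m)).norm
  have hsum : MemLp (fun g : E => 1 + ‖g‖) m μ := (memLp_const (1 : ℝ)).add hnorm
  refine hsum.integrable_norm_pow'.congr (.of_forall fun g => ?_)
  simp only [Real.norm_of_nonneg (by positivity : 0 ≤ 1 + ‖g‖)]

theorem integrable_of_abs_le_one_add_norm_pow (hF : AEStronglyMeasurable F μ)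
    (h : ∀ g, |F g| ≤ K * (1 + ‖g‖) ^ m) : Integrable F μ :=
  ((integrable_one_add_norm_pow μ m).const_mul K).mono' hF (.of_forall h)

theorem abs_integral_le_of_abs_le_one_add_norm_pow (h : ∀ g, |F g| ≤ K * (1 + ‖g‖) ^ m) :
    |∫ g, F g ∂μ| ≤ K * ∫ g, (1 + ‖g‖) ^ m ∂μ := by
  rw [← integral_const_mul]
  exact norm_integral_le_of_norm_le (f := F) ((integrable_one_add_norm_pow μ m).const_mul K)
    (.of_forall h)

theorem integrable_multilinear_diagonal {k : ℕ} (B : E [×k]→L[ℝ] ℝ) :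
    Integrable (fun g => B fun _ => g) μ := by
  have hB : Continuous fun g => B fun _ => g := B.cont.comp (by fun_prop)
  refine integrable_of_abs_le_one_add_norm_pow (K := ‖B‖) (m := k) hB.aestronglyMeasurable
    fun g => (abs_multilinear_diagonal_le B g).trans ?_
  gcongr
  exact le_add_of_nonneg_left zero_le_one

variable {f : E → ℝ} {k : ℕ} {C : ℝ}

theorem integrable_taylorSum_smul (f : E → ℝ) (k : ℕ) (b : E) (s : ℝ) :
    Integrable (fun g => taylorSum f k b (s • g)) μ := by
  simp only [taylorSum, multilinear_diagonal_smul]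
  exact integrable_finsetSum _ fun j _ =>
    ((integrable_multilinear_diagonal _).const_mul _).const_mul _

theorem integrable_comp_add_smul (hf : ContDiff ℝ (k + 1) f)
    (hC : ∀ x, ‖iteratedFDeriv ℝ (k + 1) f x‖ ≤ C * (1 + ‖x‖) ^ m) (b : E) (s : ℝ) :
    Integrable (fun g => f (b + s • g)) μ := by
  have hT := integrable_taylorSum_smul (μ := μ) f k b s
  have hcont : Continuous fun g => f (b + s • g) := hf.continuous.comp (by fun_prop)
  have hR := integrable_of_abs_le_one_add_norm_pow
    (hcont.aestronglyMeasurable.sub hT.aestronglyMeasurable)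
    fun g => abs_sub_taylorSum_smul_le hf hC b g s
  simpa [Pi.add_def] using hT.add hR

end GaussianMeasure

theorem integral_eq_zero_of_odd {G : Type*} [AddGroup G] [MeasurableSpace G] [MeasurableNeg G]
    {μ : Measure G} [μ.IsNegInvariant] {F : G → ℝ} (hF : ∀ g, F (-g) = -F g) :
    ∫ g, F g ∂μ = 0 := by
  have hneg := integral_neg_eq_self F μ
  simp only [hF, integral_neg] at hneg
  linarith

section StdGaussian

open ProbabilityTheory Laplacian

variable {E : Type*} [NormedAddCommGroup E] [InnerProductSpace ℝ E] [FiniteDimensional ℝ E]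
  [MeasurableSpace E] [BorelSpace E]

instance isNegInvariant_stdGaussian : (stdGaussian E).IsNegInvariant :=
  ⟨stdGaussian_map (LinearIsometryEquiv.neg ℝ (E := E))⟩

theorem integral_multilinear_diagonal_of_odd {k : ℕ} (hk : Odd k) (B : E [×k]→L[ℝ] ℝ) :
    ∫ g, B (fun _ => g) ∂stdGaussian E = 0 :=
  integral_eq_zero_of_odd fun g => by
    simpa [hk.neg_one_pow] using multilinear_diagonal_smul B (-1) g

theorem integral_inner_mul_dual_stdGaussian (x : E) (ℓ : StrongDual ℝ E) :
    ∫ g, ⟪x, g⟫ * ℓ g ∂stdGaussian E = ℓ x := by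
  let y := (InnerProductSpace.toDual ℝ E).symm ℓ
  have hℓ (g : E) : ℓ g = ⟪y, g⟫ := InnerProductSpace.toDual_symm_apply.symm
  have hcov := covarianceBilin_apply (IsGaussian.memLp_two_id (μ := stdGaussian E)) x y
  rw [covarianceBilin_stdGaussian, innerSL_apply_apply, real_inner_comm] at hcov
  simpa [hℓ] using hcov.symm

theorem integral_bilinear_diagonal_stdGaussian {ι : Type*} [Fintype ι]
    (e : OrthonormalBasis ι ℝ E) (L : E →L[ℝ] E →L[ℝ] ℝ) :
    ∫ g, L g g ∂stdGaussian E = ∑ i, L (e i) (e i) := by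
  have hexpand (g : E) : L g g = ∑ i, ⟪e i, g⟫ * L (e i) g := by
    calc L g g = L (∑ i, ⟪e i, g⟫ • e i) g := by rw [e.sum_repr' g]
      _ = ∑ i, ⟪e i, g⟫ * L (e i) g := by simp
  have hint (x : E) (ℓ : StrongDual ℝ E) : Integrable (fun g => ⟪x, g⟫ * ℓ g) (stdGaussian E) :=
    (IsGaussian.memLp_two_id.const_inner x).integrable_mul
      (IsGaussian.memLp_dual _ ℓ 2 ENNReal.ofNat_ne_top)
  rw [integral_congr_ae (.of_forall hexpand), integral_finsetSum _ fun i _ => hint _ _]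
  simp only [integral_inner_mul_dual_stdGaussian]

variable {f : E → ℝ}

theorem integral_taylorSum_three_smul_stdGaussian (b : E) (s : ℝ) :
    ∫ g, taylorSum f 3 b (s • g) ∂stdGaussian E = f b + s ^ 2 / 2 * Δ f b := by
  have hlap : ∫ g, iteratedFDeriv ℝ 2 f b (fun _ => g) ∂stdGaussian E = Δ f b := by
    simp only [InnerProductSpace.laplacian_eq_iteratedFDeriv_stdOrthonormalBasis,
      iteratedFDeriv_two_apply]
    exact integral_bilinear_diagonal_stdGaussian (stdOrthonormalBasis ℝ E) _
  simp only [taylorSum, multilinear_diagonal_smul]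
  rw [integral_finsetSum _ fun j _ =>
    ((integrable_multilinear_diagonal _).const_mul _).const_mul _]
  simp only [integral_const_mul, Finset.sum_range_succ, Finset.sum_range_zero, hlap,
    integral_multilinear_diagonal_of_odd (by decide : Odd 3),
    integral_multilinear_diagonal_of_odd (by decide : Odd 1)]
  simp [Nat.factorial]
  ring

theorem abs_integral_comp_add_smul_sub_le (hf : ContDiff ℝ 4 f) {C : ℝ} {m : ℕ}
    (hC : ∀ x, ‖iteratedFDeriv ℝ 4 f x‖ ≤ C * (1 + ‖x‖) ^ m) (b : E) (s : ℝ) :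
    |∫ g, f (b + s • g) ∂stdGaussian E - (f b + s ^ 2 / 2 * Δ f b)|
      ≤ C * (1 + ‖b‖ + |s|) ^ m * s ^ 4 / 6 * ∫ g, (1 + ‖g‖) ^ (m + 4) ∂stdGaussian E := by
  rw [← integral_taylorSum_three_smul_stdGaussian,
    ← integral_sub (integrable_comp_add_smul (k := 3) hf hC b s)
      (integrable_taylorSum_smul f 3 b s)]
  refine abs_integral_le_of_abs_le_one_add_norm_pow fun g => ?_
  simpa [Nat.factorial, Even.pow_abs (by decide : Even 4)]
    using abs_sub_taylorSum_smul_le (k := 3) hf hC b g s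

end StdGaussian

section EulerStep

open ProbabilityTheory Laplacian

/-- The increment of an Euler–Maruyama step of length `dt` with drift `-a` and Gaussian noise `g`;
with `a = ∇V(q)` it is the proposed increment of the Metropolis chain at `q`. -/
def eulerIncrement {E : Type*} [AddCommGroup E] [Module ℝ E] (dt : ℝ) (a g : E) : E :=
  (-dt) • a + √(2 * dt) • g

section Norm

variable {E : Type*} [NormedAddCommGroup E] [NormedSpace ℝ E] {M dt : ℝ} {a : E}

theorem norm_eulerIncrement_le (h0 : 0 ≤ dt) (h1 : dt ≤ 1) (ha : ‖a‖ ≤ M) (g : E) :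
    ‖eulerIncrement dt a g‖ ≤ √dt * ((M + 2) * (1 + ‖g‖)) := by
  have hM : 0 ≤ M := (norm_nonneg a).trans ha
  have hdt : dt ≤ √dt := Real.le_sqrt_of_sq_le (by nlinarith)
  have hsqrt : √(2 * dt) ≤ √dt * 2 := by
    rw [Real.sqrt_mul zero_le_two, mul_comm]
    gcongr
    exact Real.sqrt_le_iff.2 (by norm_num)
  calc ‖eulerIncrement dt a g‖ ≤ dt * ‖a‖ + √(2 * dt) * ‖g‖ := by
        simpa [eulerIncrement, norm_smul, abs_of_nonneg h0, abs_of_nonneg (Real.sqrt_nonneg _)]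
          using norm_add_le ((-dt) • a) (√(2 * dt) • g)
    _ ≤ √dt * M + √dt * 2 * ‖g‖ := by gcongr
    _ = √dt * (M + 2 * ‖g‖) := by ring
    _ ≤ √dt * ((M + 2) * (1 + ‖g‖)) := by
        gcongr
        nlinarith [norm_nonneg g]

end Norm

variable {E : Type*} [NormedAddCommGroup E] [InnerProductSpace ℝ E] [FiniteDimensional ℝ E]

theorem contDiff_laplacian {f : E → ℝ} {k : WithTop ℕ∞} (hf : ContDiff ℝ (k + 2) f) :
    ContDiff ℝ k (Δ f) := by
  rw [InnerProductSpace.laplacian_eq_iteratedFDeriv_stdOrthonormalBasis]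
  have hD := hf.iteratedFDeriv_right (m := k) (i := 2) le_rfl
  refine ContDiff.sum fun i _ => ?_
  let v := stdOrthonormalBasis ℝ E i
  exact (ContinuousMultilinearMap.apply ℝ (fun _ => E) ℝ ![v, v]).contDiff.comp hD

variable [MeasurableSpace E] [BorelSpace E] {f : E → ℝ} {C M : ℝ} {m : ℕ}

theorem abs_integral_comp_eulerIncrement_sub_le (hf : ContDiff ℝ 4 f)
    (hC : ∀ x, ‖iteratedFDeriv ℝ 4 f x‖ ≤ C * (1 + ‖x‖) ^ m) {dt : ℝ} (h0 : 0 ≤ dt) (h1 : dt ≤ 1)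
    {a : E} (ha : ‖(-dt) • a‖ ≤ M) :
    |∫ g, f (eulerIncrement dt a g) ∂stdGaussian E - (f ((-dt) • a) + dt * Δ f ((-dt) • a))|
      ≤ C * (M + 3) ^ m * (∫ g, (1 + ‖g‖) ^ (m + 4) ∂stdGaussian E) * dt ^ 2 := by
  have hC0 : 0 ≤ C := by simpa using (norm_nonneg _).trans (hC 0)
  have hM : 0 ≤ M := (norm_nonneg _).trans ha
  have hs : √(2 * dt) ^ 2 = 2 * dt := Real.sq_sqrt (by positivity)
  have hs4 : √(2 * dt) ^ 4 = 4 * dt ^ 2 := by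
    rw [pow_mul _ 2 2, hs]
    ring
  have hs2 : |√(2 * dt)| ≤ 2 := by
    rw [abs_of_nonneg (Real.sqrt_nonneg _)]
    exact Real.sqrt_le_iff.2 ⟨zero_le_two, by linarith⟩
  have hheat := abs_integral_comp_add_smul_sub_le hf hC ((-dt) • a) √(2 * dt)
  rw [hs4, hs, mul_div_cancel_left₀ dt two_ne_zero] at hheat
  refine hheat.trans ?_
  calc _ ≤ C * (1 + M + 2) ^ m * (6 * dt ^ 2) / 6 * ∫ g, (1 + ‖g‖) ^ (m + 4) ∂stdGaussian E := by
        gcongr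
        norm_num
    _ = C * (M + 3) ^ m * (∫ g, (1 + ‖g‖) ^ (m + 4) ∂stdGaussian E) * dt ^ 2 := by ring

theorem exists_abs_integral_comp_eulerIncrement_sub_le (hf : ContDiff ℝ 4 f)
    (hC : ∀ x, ‖iteratedFDeriv ℝ 4 f x‖ ≤ C * (1 + ‖x‖) ^ m) (hM : 0 ≤ M) :
    ∃ K ≥ 0, ∀ dt, 0 ≤ dt → dt ≤ 1 → ∀ a : E, ‖a‖ ≤ M →
      |∫ g, f (eulerIncrement dt a g) ∂stdGaussian E - f 0 - dt * (-fderiv ℝ f 0 a + Δ f 0)|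
        ≤ K * dt ^ 2 := by
  have hC0 : 0 ≤ C := by simpa using (norm_nonneg _).trans (hC 0)
  obtain ⟨K₁, hK₁, hf₁⟩ := exists_abs_sub_fderiv_le_of_norm_le (hf.of_le (by norm_num)) 0 M
  obtain ⟨K₂, hK₂, hf₂⟩ :=
    exists_abs_sub_le_of_norm_le (contDiff_laplacian (k := 1) (hf.of_le (by norm_num))) 0 M
  let J := ∫ g, (1 + ‖g‖) ^ (m + 4) ∂stdGaussian E
  have : 0 ≤ J := integral_nonneg fun g => by positivity
  refine ⟨C * (M + 3) ^ m * J + K₁ * M ^ 2 + K₂ * M, by positivity, fun dt h0 h1 a ha => ?_⟩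
  have hb : ‖(-dt) • a‖ ≤ dt * M := by
    rw [norm_smul, norm_neg, Real.norm_of_nonneg h0]
    gcongr
  have hbM : ‖(-dt) • a‖ ≤ M := hb.trans (mul_le_of_le_one_left hM h1)
  have hnoise := abs_integral_comp_eulerIncrement_sub_le hf hC h0 h1 hbM
  have hdrift : |f ((-dt) • a) - (f 0 - dt * fderiv ℝ f 0 a)| ≤ K₁ * M ^ 2 * dt ^ 2 := by
    calc _ ≤ K₁ * ‖(-dt) • a‖ ^ 2 := by simpa [← sub_eq_add_neg] using hf₁ _ hbM
      _ ≤ K₁ * (dt * M) ^ 2 := by gcongr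
      _ = K₁ * M ^ 2 * dt ^ 2 := by ring
  have hlap : |dt * Δ f ((-dt) • a) - dt * Δ f 0| ≤ K₂ * M * dt ^ 2 := by
    calc _ = dt * |Δ f ((-dt) • a) - Δ f 0| := by rw [← mul_sub, abs_mul, abs_of_nonneg h0]
      _ ≤ dt * (K₂ * ‖(-dt) • a‖) := by
        gcongr
        simpa using hf₂ _ hbM
      _ ≤ dt * (K₂ * (dt * M)) := by gcongr
      _ = K₂ * M * dt ^ 2 := by ring
  rw [abs_le] at hnoise hdrift hlap ⊢
  constructor <;> linarith

end EulerStep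

section TrapezoidalRule

open Set

theorem abs_sub_trapezoid_deriv_le {φ : ℝ → ℝ} (hφ : ContDiff ℝ 3 φ) {a b K : ℝ} (hab : a < b)
    (hK : ∀ t ∈ Icc a b, |iteratedDeriv 3 φ t| ≤ K) :
    |φ b - φ a - (b - a) / 2 * (deriv φ a + deriv φ b)| ≤ (b - a) ^ 3 * K / 12 := by
  have hφ' : ContDiff ℝ 2 (deriv φ) := ((contDiff_succ_iff_deriv (n := 2)).1 hφ).2.2
  have hK0 : 0 ≤ K := (abs_nonneg _).trans (hK a (left_mem_Icc.2 hab.le))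
  have hbound (t : ℝ) : |iteratedDerivWithin 2 (deriv φ) (uIcc a b) t| ≤ K := by
    rw [uIcc_of_le hab.le]
    by_cases ht : t ∈ Icc a b
    · rw [iteratedDerivWithin_eq_iteratedDeriv (uniqueDiffOn_Icc hab) hφ'.contDiffAt ht,
        ← iteratedDeriv_succ']
      exact hK t ht
    · rw [iteratedDerivWithin_succ, derivWithin_zero_of_notMem_closure (by rwa [closure_Icc]),
        abs_zero]
      exact hK0
  have hint : ∫ t in a..b, deriv φ t = φ b - φ a :=
    intervalIntegral.integral_deriv_eq_sub (fun t _ => hφ.differentiable (by norm_num) t)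
      (hφ'.continuous.intervalIntegrable a b)
  have herror := trapezoidal_error_le_of_c2 hφ'.contDiffOn hbound one_pos
  rw [trapezoidal_error, trapezoidal_integral_one, hint, abs_sub_comm,
    abs_of_pos (sub_pos.2 hab)] at herror
  simpa using herror

variable {E : Type*} [NormedAddCommGroup E] [NormedSpace ℝ E] {V : E → ℝ} {M : ℝ}

theorem abs_sub_trapezoid_fderiv_le (hV : ContDiff ℝ 3 V)
    (hM : ∀ q, ‖iteratedFDeriv ℝ 3 V q‖ ≤ M) (q x : E) :
    |V (q + x) - V q - (fderiv ℝ V q x + fderiv ℝ V (q + x) x) / 2| ≤ M / 12 * ‖x‖ ^ 3 := by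
  have hderiv (t : ℝ) : deriv (fun t : ℝ => V (q + t • x)) t = fderiv ℝ V (q + t • x) x := by
    simpa using iteratedDeriv_comp_add_smul (k := 1) (hV.of_le (by norm_num)) q x t
  have hline := abs_sub_trapezoid_deriv_le (φ := fun t : ℝ => V (q + t • x))
    (hV.comp (by fun_prop)) zero_lt_one (K := M * ‖x‖ ^ 3) fun t _ => by
      rw [iteratedDeriv_comp_add_smul hV]
      exact (abs_multilinear_diagonal_le _ x).trans (by gcongr; exact hM _)
  rw [hderiv, hderiv] at hline
  convert hline using 2
  · simp only [one_smul, zero_smul, add_zero]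
    ring
  · ring

end TrapezoidalRule

section Gradient

variable {E : Type*} [NormedAddCommGroup E] [InnerProductSpace ℝ E] [CompleteSpace E]
  {V : E → ℝ}

theorem norm_gradient_eq_norm_iteratedFDeriv_one (q : E) :
    ‖gradient V q‖ = ‖iteratedFDeriv ℝ 1 V q‖ := by
  rw [gradient, LinearIsometryEquiv.norm_map, norm_iteratedFDeriv_one]

theorem continuous_gradient (hV : ContDiff ℝ 1 V) : Continuous (gradient V) :=
  (InnerProductSpace.toDual ℝ E).symm.continuous.comp (hV.continuous_fderiv one_ne_zero)

theorem norm_gradient_sub_le (hV : ContDiff ℝ 2 V) {M : ℝ}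
    (hM : ∀ q, ‖iteratedFDeriv ℝ 2 V q‖ ≤ M) (p q : E) :
    ‖gradient V p - gradient V q‖ ≤ M * ‖p - q‖ := by
  have hV' : ContDiff ℝ 1 (fderiv ℝ V) := hV.fderiv_right (by norm_num)
  rw [gradient, gradient, ← map_sub, LinearIsometryEquiv.norm_map]
  refine convex_univ.norm_image_sub_le_of_norm_fderiv_le (𝕜 := ℝ)
    (fun z _ => hV'.differentiable one_ne_zero z) (fun z _ => ?_) (Set.mem_univ q) (Set.mem_univ p)
  rw [← norm_iteratedFDeriv_one, norm_iteratedFDeriv_fderiv]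
  exact hM z

theorem abs_norm_sq_gradient_sub_le (hV : ContDiff ℝ 2 V) {M₁ M₂ : ℝ}
    (hM₁ : ∀ q, ‖iteratedFDeriv ℝ 1 V q‖ ≤ M₁) (hM₂ : ∀ q, ‖iteratedFDeriv ℝ 2 V q‖ ≤ M₂)
    (p q : E) :
    |‖gradient V p‖ ^ 2 - ‖gradient V q‖ ^ 2| ≤ 2 * M₁ * M₂ * ‖p - q‖ := by
  have hgrad (z : E) : ‖gradient V z‖ ≤ M₁ :=
    (norm_gradient_eq_norm_iteratedFDeriv_one z).trans_le (hM₁ z)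
  have hM₁0 : 0 ≤ M₁ := (norm_nonneg _).trans (hgrad p)
  have hdiff := (abs_norm_sub_norm_le _ _).trans (norm_gradient_sub_le hV hM₂ p q)
  rw [sq_sub_sq, abs_mul, abs_of_nonneg (by positivity)]
  calc (‖gradient V p‖ + ‖gradient V q‖) * |‖gradient V p‖ - ‖gradient V q‖|
      ≤ (M₁ + M₁) * (M₂ * ‖p - q‖) := by gcongr <;> exact hgrad _
    _ = 2 * M₁ * M₂ * ‖p - q‖ := by ring

end Gradient

section Periodic

variable {E : Type*} [NormedAddCommGroup E] [NormedSpace ℝ E]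

theorem exists_norm_le_of_periodic {ι G : Type*} [Finite ι] [NormedAddCommGroup G]
    (b : Module.Basis ι ℝ E) {F : E → G} (hF : Continuous F)
    (hper : ∀ i, Function.Periodic F (b i)) : ∃ K, ∀ x, ‖F x‖ ≤ K := by
  have := Fintype.ofFinite ι
  have : FiniteDimensional ℝ E := b.finiteDimensional_of_finite
  have : ProperSpace E := FiniteDimensional.proper_real E
  have hspan {v : E} (hv : v ∈ Submodule.span ℤ (Set.range b)) : Function.Periodic F v := by
    induction hv using Submodule.span_induction with
    | mem v hv => obtain ⟨i, rfl⟩ := hv; exact hper i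
    | zero => simp [Function.Periodic]
    | add v w _ _ hv hw => exact hv.add_period hw
    | smul a v _ hv => exact hv.zsmul a
  obtain ⟨K, hK⟩ := (isCompact_closedBall (0 : E) (∑ i, ‖b i‖)).exists_bound_of_continuousOn
    hF.continuousOn
  refine ⟨K, fun x => ?_⟩
  have hfract : F (ZSpan.fract b x) = F x := (hspan (ZSpan.floor b x).2).sub_eq x
  rw [← hfract]
  exact hK _ (mem_closedBall_zero_iff.2 (ZSpan.norm_fract_le b x))

theorem periodic_iteratedFDeriv {G : Type*} [NormedAddCommGroup G] [NormedSpace ℝ G] {F : E → G}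
    {v : E} (hF : Function.Periodic F v) (k : ℕ) :
    Function.Periodic (iteratedFDeriv ℝ k F) v := fun x => by
  rw [← iteratedFDeriv_comp_add_right, hF.funext]

theorem exists_norm_iteratedFDeriv_le_of_periodic {n : ℕ} {L : ℝ} (hL : L ≠ 0) {V : En n → ℝ}
    {k : ℕ} (hV : ContDiff ℝ k V)
    (hper : ∀ i, Function.Periodic V (L • EuclideanSpace.single i (1 : ℝ))) :
    ∃ K, ∀ q, ‖iteratedFDeriv ℝ k V q‖ ≤ K := by
  let b := (EuclideanSpace.basisFun (Fin n) ℝ).toBasis.isUnitSMul fun _ => hL.isUnit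
  refine exists_norm_le_of_periodic b (hV.continuous_iteratedFDeriv le_rfl) fun i => ?_
  have hb : b i = L • EuclideanSpace.single i (1 : ℝ) := by
    simp [b, Module.Basis.isUnitSMul_apply]
  exact hb ▸ periodic_iteratedFDeriv (hper i) k

end Periodic

section Metropolis

variable {n : ℕ} {V : En n → ℝ} {dt : ℝ}

theorem Rk_nonneg (V : En n → ℝ) (h0 : 0 ≤ dt) (q q' : En n) : 0 ≤ Rk V dt q q' := by
  unfold Rk Tker
  positivity

theorem Rk_le_one (V : En n → ℝ) (dt : ℝ) (q q' : En n) : Rk V dt q q' ≤ 1 :=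
  min_le_left _ _

theorem propMove_eq_add_eulerIncrement (V : En n → ℝ) (dt : ℝ) (q g : En n) :
    propMove V dt q g = q + eulerIncrement dt (gradient V q) g := by
  rw [propMove, eulerIncrement, neg_smul]
  abel

theorem measurable_Rk_propMove (hV : ContDiff ℝ 1 V) (dt : ℝ) (q : En n) :
    Measurable fun g => Rk V dt q (propMove V dt q g) := by
  have hgrad := (continuous_gradient hV).measurable
  have hV' := hV.continuous.measurable
  unfold Rk Tker propMove
  fun_prop

theorem Rk_add_eq_min_exp (V : En n → ℝ) (hdt : 0 < dt) (q x : En n) :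
    Rk V dt q (q + x) = min 1 (Real.exp (-(V (q + x) - V q
      - (fderiv ℝ V q x + fderiv ℝ V (q + x) x) / 2)
      + dt / 4 * (‖gradient V q‖ ^ 2 - ‖gradient V (q + x)‖ ^ 2))) := by
  have hratio (c A B A' B' : ℝ) (hc : 0 < c) :
      Real.exp A * (c * Real.exp B) / (Real.exp A' * (c * Real.exp B'))
        = Real.exp (A + B - (A' + B')) := by
    rw [Real.exp_sub, Real.exp_add, Real.exp_add]
    field_simp
  have hback : q - (q + x) + dt • gradient V (q + x) = -(x - dt • gradient V (q + x)) := by abel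
  have hsq (y : En n) : ‖dt • y‖ ^ 2 = dt ^ 2 * ‖y‖ ^ 2 := by
    rw [norm_smul, mul_pow, Real.norm_eq_abs, sq_abs]
  rw [Rk, Tker, Tker, hratio _ _ _ _ _ (by positivity), hback, add_sub_cancel_left, norm_neg,
    norm_add_sq_real, norm_sub_sq_real, real_inner_smul_right, real_inner_smul_right,
    inner_gradient_right, inner_gradient_right, conj_trivial, conj_trivial, hsq, hsq]
  congr 2
  field_simp
  ring

theorem one_sub_min_one_exp_le_abs (a : ℝ) : 1 - min 1 (Real.exp a) ≤ |a| := by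
  rcases le_total 1 (Real.exp a) with h | h
  · simp [min_eq_left h]
  · rw [min_eq_right h]
    linarith [Real.add_one_le_exp a, neg_le_abs a]

variable {M₁ M₂ M₃ : ℝ}

theorem one_sub_Rk_le (hV : ContDiff ℝ 3 V) (hM₁ : ∀ q, ‖iteratedFDeriv ℝ 1 V q‖ ≤ M₁)
    (hM₂ : ∀ q, ‖iteratedFDeriv ℝ 2 V q‖ ≤ M₂) (hM₃ : ∀ q, ‖iteratedFDeriv ℝ 3 V q‖ ≤ M₃)
    (hdt : 0 < dt) (q x : En n) :
    1 - Rk V dt q (q + x) ≤ M₃ / 12 * ‖x‖ ^ 3 + M₁ * M₂ / 2 * (dt * ‖x‖) := by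
  rw [Rk_add_eq_min_exp V hdt]
  refine (one_sub_min_one_exp_le_abs _).trans ((abs_add_le _ _).trans (add_le_add ?_ ?_))
  · rw [abs_neg]
    exact abs_sub_trapezoid_fderiv_le hV hM₃ q x
  · have hgrad := abs_norm_sq_gradient_sub_le (hV.of_le (by norm_num)) hM₁ hM₂ q (q + x)
    rw [sub_add_cancel_left, norm_neg] at hgrad
    rw [abs_mul, abs_of_pos (by positivity)]
    calc _ ≤ dt / 4 * (2 * M₁ * M₂ * ‖x‖) := by gcongr
      _ = M₁ * M₂ / 2 * (dt * ‖x‖) := by ring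

theorem one_sub_Rk_propMove_le (hV : ContDiff ℝ 3 V) (hM₁ : ∀ q, ‖iteratedFDeriv ℝ 1 V q‖ ≤ M₁)
    (hM₂ : ∀ q, ‖iteratedFDeriv ℝ 2 V q‖ ≤ M₂) (hM₃ : ∀ q, ‖iteratedFDeriv ℝ 3 V q‖ ≤ M₃)
    (hdt : 0 < dt) (h1 : dt ≤ 1) (q g : En n) :
    1 - Rk V dt q (propMove V dt q g)
      ≤ (M₃ / 12 + M₁ * M₂ / 2) * (√dt * ((M₁ + 2) * (1 + ‖g‖))) ^ 3 := by
  have hM₁0 : 0 ≤ M₁ := (norm_nonneg _).trans (hM₁ q)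
  have hM₂0 : 0 ≤ M₂ := (norm_nonneg _).trans (hM₂ q)
  have hM₃0 : 0 ≤ M₃ := (norm_nonneg _).trans (hM₃ q)
  have hx := norm_eulerIncrement_le hdt.le h1
    ((norm_gradient_eq_norm_iteratedFDeriv_one q).trans_le (hM₁ q)) g
  rw [propMove_eq_add_eulerIncrement]
  refine (one_sub_Rk_le hV hM₁ hM₂ hM₃ hdt q _).trans ?_
  set x := eulerIncrement dt (gradient V q) g
  let X := (M₁ + 2) * (1 + ‖g‖)
  have hX : 1 ≤ X := by
    have := norm_nonneg g
    nlinarith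
  calc M₃ / 12 * ‖x‖ ^ 3 + M₁ * M₂ / 2 * (dt * ‖x‖)
      ≤ M₃ / 12 * (√dt * X) ^ 3 + M₁ * M₂ / 2 * ((√dt * X) ^ 2 * (√dt * X)) := by
        gcongr
        rw [mul_pow, Real.sq_sqrt hdt.le]
        exact le_mul_of_one_le_right hdt.le (one_le_pow₀ hX)
    _ = (M₃ / 12 + M₁ * M₂ / 2) * (√dt * X) ^ 3 := by ring

theorem setIntegral_Icc_ite_le {r : ℝ} (h0 : 0 ≤ r) (h1 : r ≤ 1) (A B : ℝ) :
    ∫ u in Set.Icc (0 : ℝ) 1, (if u ≤ r then A else B) = r * A + (1 - r) * B := by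
  have hsplit : (fun u : ℝ => if u ≤ r then A else B)
      = fun u => (Set.Iic r).indicator (fun _ => A - B) u + B := by
    ext u
    by_cases h : u ≤ r <;> simp [h]
  have hinter : Set.Icc (0 : ℝ) 1 ∩ Set.Iic r = Set.Icc 0 r := by
    ext u
    simp only [Set.mem_inter_iff, Set.mem_Icc, Set.mem_Iic]
    grind
  rw [hsplit, integral_add ((integrable_const _).indicator measurableSet_Iic) (integrable_const _),
    setIntegral_indicator measurableSet_Iic, hinter]
  simp [measureReal_def, h0]
  ring

/-- The correction to `f (eulerIncrement dt (gradient V q) g)` due to the rejection of the move,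
conditionally on the Gaussian increment `g`. -/
def rejectionTerm (V : En n → ℝ) (dt : ℝ) (f : En n → ℝ) (q g : En n) : ℝ :=
  (1 - Rk V dt q (propMove V dt q g)) * (f (eulerIncrement dt (gradient V q) g) - f 0)

theorem setIntegral_comp_deltaInc (V : En n → ℝ) (h0 : 0 ≤ dt) (f : En n → ℝ) (q g : En n) :
    ∫ u in Set.Icc (0 : ℝ) 1, f (deltaInc V dt q g u)
      = f (eulerIncrement dt (gradient V q) g) - rejectionTerm V dt f q g := by
  simp only [deltaInc, apply_ite f, rejectionTerm]
  rw [setIntegral_Icc_ite_le (Rk_nonneg V h0 _ _) (Rk_le_one V _ _ _), eulerIncrement]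
  ring

variable {f : En n → ℝ}

theorem abs_rejectionTerm_le (hV : ContDiff ℝ 3 V) (hM₁ : ∀ q, ‖iteratedFDeriv ℝ 1 V q‖ ≤ M₁)
    (hM₂ : ∀ q, ‖iteratedFDeriv ℝ 2 V q‖ ≤ M₂) (hM₃ : ∀ q, ‖iteratedFDeriv ℝ 3 V q‖ ≤ M₃)
    {K : ℝ} (hK : 0 ≤ K) {p : ℕ} (hf : ∀ x, |f x - f 0| ≤ K * (1 + ‖x‖) ^ p * ‖x‖) (hdt : 0 < dt)
    (h1 : dt ≤ 1) (q g : En n) :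
    |rejectionTerm V dt f q g|
      ≤ (M₃ / 12 + M₁ * M₂ / 2) * K * (M₁ + 3) ^ p * (M₁ + 2) ^ 4 * dt ^ 2
        * (1 + ‖g‖) ^ (p + 4) := by
  have hM₁0 : 0 ≤ M₁ := (norm_nonneg _).trans (hM₁ q)
  have hreject := one_sub_Rk_propMove_le hV hM₁ hM₂ hM₃ hdt h1 q g
  have hx := norm_eulerIncrement_le hdt.le h1
    ((norm_gradient_eq_norm_iteratedFDeriv_one q).trans_le (hM₁ q)) g
  rw [rejectionTerm, abs_mul, abs_of_nonneg (sub_nonneg.2 (Rk_le_one V dt q _))]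
  set x := eulerIncrement dt (gradient V q) g
  set Y := √dt * ((M₁ + 2) * (1 + ‖g‖)) with hY
  have hY4 : Y ^ 4 = (M₁ + 2) ^ 4 * dt ^ 2 * (1 + ‖g‖) ^ 4 := by
    rw [hY, mul_pow, pow_mul √dt 2 2, Real.sq_sqrt hdt.le]
    ring
  have hx' : 1 + ‖x‖ ≤ (M₁ + 3) * (1 + ‖g‖) := by
    have hYle : Y ≤ (M₁ + 2) * (1 + ‖g‖) :=
      mul_le_of_le_one_left (by positivity) (Real.sqrt_le_one.2 h1)
    linarith [norm_nonneg g]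
  have hincr : |f x - f 0| ≤ K * ((M₁ + 3) * (1 + ‖g‖)) ^ p * Y := (hf x).trans (by gcongr)
  calc _ ≤ (M₃ / 12 + M₁ * M₂ / 2) * Y ^ 3 * (K * ((M₁ + 3) * (1 + ‖g‖)) ^ p * Y) :=
        mul_le_mul hreject hincr (abs_nonneg _)
          ((sub_nonneg.2 (Rk_le_one V dt q _)).trans hreject)
    _ = (M₃ / 12 + M₁ * M₂ / 2) * K * (M₁ + 3) ^ p * (1 + ‖g‖) ^ p * Y ^ 4 := by
        rw [mul_pow (M₁ + 3)]
        ring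
    _ = (M₃ / 12 + M₁ * M₂ / 2) * K * (M₁ + 3) ^ p * (M₁ + 2) ^ 4 * dt ^ 2
          * (1 + ‖g‖) ^ (p + 4) := by
        rw [hY4]
        ring

theorem measurable_rejectionTerm (hV : ContDiff ℝ 1 V) (hf : Continuous f) (dt : ℝ) (q : En n) :
    Measurable (rejectionTerm V dt f q) := by
  have hincr : Continuous (eulerIncrement dt (gradient V q)) := by
    unfold eulerIncrement
    fun_prop
  exact (measurable_const.sub (measurable_Rk_propMove hV dt q)).mul
    ((hf.comp hincr).measurable.sub measurable_const)

theorem exists_abs_integral_rejectionTerm_le (hV : ContDiff ℝ 3 V)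
    (hVbound : ∀ k ∈ Set.Icc 1 3, ∃ M, ∀ q, ‖iteratedFDeriv ℝ k V q‖ ≤ M) (hf : ContDiff ℝ 4 f)
    {C : ℝ} {m : ℕ} (hC : ∀ x, ‖iteratedFDeriv ℝ 4 f x‖ ≤ C * (1 + ‖x‖) ^ m)
    (μ : Measure (En n)) [ProbabilityTheory.IsGaussian μ] :
    ∃ K ≥ 0, ∀ dt, 0 < dt → dt ≤ 1 → ∀ q, Integrable (rejectionTerm V dt f q) μ ∧
      |∫ g, rejectionTerm V dt f q g ∂μ| ≤ K * dt ^ 2 := by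
  obtain ⟨M₁, hM₁⟩ := hVbound 1 (by norm_num)
  obtain ⟨M₂, hM₂⟩ := hVbound 2 (by norm_num)
  obtain ⟨M₃, hM₃⟩ := hVbound 3 (by norm_num)
  have hM₁0 : 0 ≤ M₁ := (norm_nonneg _).trans (hM₁ 0)
  have hM₂0 : 0 ≤ M₂ := (norm_nonneg _).trans (hM₂ 0)
  have hM₃0 : 0 ≤ M₃ := (norm_nonneg _).trans (hM₃ 0)
  obtain ⟨K, hK, hf₀⟩ := exists_abs_sub_le_of_iteratedFDeriv_growth (k := 3) hf hC
  let J := ∫ g, (1 + ‖g‖) ^ (m + 3 + 4) ∂μ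
  have : 0 ≤ J := integral_nonneg fun g => by positivity
  refine ⟨(M₃ / 12 + M₁ * M₂ / 2) * K * (M₁ + 3) ^ (m + 3) * (M₁ + 2) ^ 4 * J, by positivity,
    fun dt hdt h1 q => ?_⟩
  have hterm := abs_rejectionTerm_le hV hM₁ hM₂ hM₃ hK hf₀ hdt h1 q
  refine ⟨integrable_of_abs_le_one_add_norm_pow (measurable_rejectionTerm (hV.of_le (by norm_num))
    hf.continuous dt q).aestronglyMeasurable hterm, ?_⟩
  rw [mul_right_comm]
  exact abs_integral_le_of_abs_le_one_add_norm_pow hterm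

end Metropolis

section Gauss

open ProbabilityTheory Laplacian

instance isFiniteMeasure_gauss (n : ℕ) : IsFiniteMeasure (gauss n) := by
  refine isFiniteMeasure_withDensity_ofReal (Integrable.const_mul ?_ _).2
  have hexp := (GaussianFourier.integrable_cexp_neg_mul_sq_norm_add (V := En n) (b := (1 / 2 : ℂ))
    (by norm_num) 0 0).norm
  refine hexp.congr (.of_forall fun g => ?_)
  have hreal : (-(1 / 2 : ℂ) * (‖g‖ : ℂ) ^ 2 + 0 * ((⟪0, g⟫ : ℝ) : ℂ))
      = ((-‖g‖ ^ 2 / 2 : ℝ) : ℂ) := by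
    push_cast
    ring
  simp only [hreal, Complex.norm_exp, Complex.ofReal_re]

theorem charFun_gauss (n : ℕ) (t : En n) : charFun (gauss n) t = Complex.exp (-‖t‖ ^ 2 / 2) := by
  let c : ℝ := (2 * Real.pi) ^ (-(n : ℝ) / 2)
  have hnormal : (c : ℂ) * ((Real.pi : ℂ) / (1 / 2)) ^ ((Module.finrank ℝ (En n) : ℂ) / 2) = 1 := by
    have hpi : (0 : ℝ) < 2 * Real.pi := by positivity
    have hbase : (Real.pi : ℂ) / (1 / 2) = ((2 * Real.pi : ℝ) : ℂ) := by
      push_cast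
      ring
    have hpow : (n : ℂ) / 2 = ((n / 2 : ℝ) : ℂ) := by push_cast; rfl
    rw [hbase, finrank_euclideanSpace_fin, hpow, ← Complex.ofReal_cpow hpi.le,
      ← Complex.ofReal_mul, ← Real.rpow_add hpi, neg_div, neg_add_cancel, Real.rpow_zero,
      Complex.ofReal_one]
  have hdensity (g : En n) :
      (ENNReal.ofReal (c * Real.exp (-‖g‖ ^ 2 / 2))).toReal • Complex.exp (⟪g, t⟫ * Complex.I)
        = c * Complex.exp (-(1 / 2 : ℂ) * (‖g‖ : ℂ) ^ 2 + Complex.I * ⟪t, g⟫) := by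
    rw [ENNReal.toReal_ofReal (by positivity), Complex.exp_add, real_inner_comm, Complex.real_smul]
    push_cast
    ring_nf
  rw [charFun_apply, gauss, integral_withDensity_eq_integral_toReal_smul (by fun_prop) (by simp)]
  change ∫ g, (ENNReal.ofReal (c * _)).toReal • _ = _
  simp only [hdensity]
  rw [integral_const_mul, GaussianFourier.integral_cexp_neg_mul_sq_norm_add (by norm_num),
    ← mul_assoc, hnormal, one_mul, Complex.I_sq]
  ring_nf

theorem gauss_eq_stdGaussian (n : ℕ) : gauss n = stdGaussian (En n) :=
  Measure.ext_of_charFun (funext fun t => by rw [charFun_gauss, charFun_stdGaussian])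

theorem lap_eq_laplacian {n : ℕ} (f : En n → ℝ) : lap f = Δ f := by
  rw [InnerProductSpace.laplacian_eq_iteratedFDeriv_orthonormalBasis f
    (EuclideanSpace.basisFun (Fin n) ℝ)]
  ext q
  refine Finset.sum_congr rfl fun i _ => congrArg _ (funext fun j => ?_)
  fin_cases j <;> simp

end Gauss

section Expansion

open ProbabilityTheory

theorem stmt17_general {n : ℕ} {V f : En n → ℝ} (hV : ContDiff ℝ 3 V)
    (hVbound : ∀ k ∈ Set.Icc 1 3, ∃ M, ∀ q, ‖iteratedFDeriv ℝ k V q‖ ≤ M) (hf : ContDiff ℝ 4 f)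
    {C : ℝ} {m : ℕ} (hC : ∀ x, ‖iteratedFDeriv ℝ 4 f x‖ ≤ C * (1 + ‖x‖) ^ m) :
    ∃ K ≥ 0, ∀ dt, 0 < dt → dt ≤ 1 → ∀ q,
      |obsbar V dt f q - f 0 - dt * (-⟪gradient V q, gradient f 0⟫ + lap f 0)| ≤ K * dt ^ 2 := by
  obtain ⟨M, hM⟩ := hVbound 1 (by norm_num)
  obtain ⟨K₁, hK₁, hEuler⟩ := exists_abs_integral_comp_eulerIncrement_sub_le hf hC
    ((norm_nonneg _).trans (hM 0))
  obtain ⟨K₂, hK₂, hreject⟩ := exists_abs_integral_rejectionTerm_le hV hVbound hf hC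
    (stdGaussian (En n))
  refine ⟨K₁ + K₂, by positivity, fun dt hdt h1 q => ?_⟩
  have hE := hEuler dt hdt.le h1 (gradient V q)
    ((norm_gradient_eq_norm_iteratedFDeriv_one q).trans_le (hM q))
  obtain ⟨hint, hR⟩ := hreject dt hdt h1 q
  have hobs : obsbar V dt f q = ∫ g, f (eulerIncrement dt (gradient V q) g) ∂stdGaussian (En n)
      - ∫ g, rejectionTerm V dt f q g ∂stdGaussian (En n) := by
    simp only [obsbar, setIntegral_comp_deltaInc V hdt.le, gauss_eq_stdGaussian]
    exact integral_sub (integrable_comp_add_smul (k := 3) hf hC _ _) hint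
  rw [hobs, inner_gradient_right, conj_trivial, lap_eq_laplacian, add_mul]
  rw [abs_le] at hE hR ⊢
  constructor <;> linarith

end Expansion

theorem stmt17 (n : ℕ) (hn : 1 ≤ n) (L : ℝ) (hL : 0 < L)
    (V : En n → ℝ) (hV : ContDiff ℝ (⊤ : ℕ∞) V)
    (hper : ∀ (q : En n) (i : Fin n), V (q + L • EuclideanSpace.single i (1 : ℝ)) = V q)
    (f : En n → ℝ) (hf : ContDiff ℝ (⊤ : ℕ∞) f)
    (hfgrowth : ∀ k : ℕ, ∃ (Ck : ℝ) (m : ℕ), ∀ x : En n,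
      ‖iteratedFDeriv ℝ k f x‖ ≤ Ck * (1 + ‖x‖) ^ m) :
    ∃ C ≥ (0 : ℝ), ∃ dts > (0 : ℝ), ∀ dt : ℝ, 0 < dt → dt ≤ dts → ∀ q : En n,
      |obsbar V dt f q - f 0 -
          dt * (-⟪gradient V q, gradient f 0⟫ + lap f 0)| ≤ C * dt ^ 2 := by
  obtain ⟨C, m, hC⟩ := hfgrowth 4
  obtain ⟨K, hK, hexpansion⟩ := stmt17_general (contDiff_infty.1 hV 3)
    (fun k _ => exists_norm_iteratedFDeriv_le_of_periodic hL.ne' (contDiff_infty.1 hV k)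
      fun i q => hper q i)
    (contDiff_infty.1 hf 4) hC
  exact ⟨K, hK, 1, one_pos, hexpansion⟩
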